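/- arXiv:1507.00323 — 2 statements merged into one kernel-verified Lean document; each statement's English description precedes it below -/
import Mathlib

section
/- Let Ω ⊆ ℂ be a bounded, open, simply connected set with 0 ∈ Ω, and let h : ℂ → ℂ be holomorphic and injective on the open unit disc B₁ with h(B₁) = Ω and h(0) = 0. Let v : ℂ → ℝ be continuously differentiable with compact support contained in B₁, and define u : Ω → ℝ by u(h(y)) = v(y) for y ∈ B₁ (i.e. u = v ∘ h⁻¹). Then the Dirichlet energy is conformally invariant: ∫_Ω ‖∇u(x)‖² dx = ∫_{B₁} ‖∇v(y)‖² dy. -/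
/-!
The change of variables `x = h y` turns the left-hand side into
`∫_{B₁} |det Dh(y)| ‖∇u(h y)‖² dy`. The real derivative of `h` at `y` is multiplication by
`c = h'(y)`, whose determinant is `‖c‖²` (`det_mulCLM`). Where `c ≠ 0`, the local inverse of `h`
shows that `u` is differentiable at `h y`, so the chain rule gives `∇v(y) = ∇u(h y) ∘ c`, whence
`‖∇v(y)‖ = ‖c‖ ‖∇u(h y)‖` as multiplication by `c` is a similarity of ratio `‖c‖`
(`norm_comp_mulCLM`). The two integrands therefore agree away from the zeros of `h'`.

An injective holomorphic function has no critical points, but less is enough here: `h'` is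
holomorphic and not identically zero, so its zeros are isolated and form a null set
(`ae_deriv_ne_zero`).
-/

open Metric Complex MeasureTheory Filter Topology

/-- Multiplication by `c` on `ℂ`, as a real-linear map. -/
noncomputable def mulCLM (c : ℂ) : ℂ →L[ℝ] ℂ :=
  (ContinuousLinearMap.toSpanSingleton ℂ c).restrictScalars ℝ

lemma det_mulCLM (c : ℂ) : (mulCLM c).det = ‖c‖ ^ 2 := by
  simp [mulCLM, ContinuousLinearMap.det, LinearMap.det_restrictScalars,
    Algebra.norm_complex_eq, Complex.normSq_eq_norm_sq]

lemma norm_mulCLM_le (c : ℂ) : ‖mulCLM c‖ ≤ ‖c‖ := by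
  refine ContinuousLinearMap.opNorm_le_bound _ (norm_nonneg _) fun z => ?_
  simp [mulCLM, mul_comm]

lemma norm_comp_mulCLM (L : ℂ →L[ℝ] ℝ) {c : ℂ} (hc : c ≠ 0) :
    ‖L ∘L mulCLM c‖ = ‖c‖ * ‖L‖ := by
  have upper : ∀ (L : ℂ →L[ℝ] ℝ) (c : ℂ), ‖L ∘L mulCLM c‖ ≤ ‖c‖ * ‖L‖ := fun L c =>
    (L.opNorm_comp_le _).trans <| by
      rw [mul_comm]
      exact mul_le_mul_of_nonneg_right (norm_mulCLM_le c) (norm_nonneg _)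
  refine le_antisymm (upper L c) ?_
  -- The lower bound is the upper bound for `L ∘ c` and the inverse multiplication `c⁻¹`.
  have hL : (L ∘L mulCLM c) ∘L mulCLM c⁻¹ = L := by
    ext z
    simp [mulCLM, hc]
  have h1 := upper (L ∘L mulCLM c) c⁻¹
  rw [hL, norm_inv] at h1
  have hc' : 0 < ‖c‖ := norm_pos_iff.2 hc
  calc ‖c‖ * ‖L‖ ≤ ‖c‖ * (‖c‖⁻¹ * ‖L ∘L mulCLM c‖) := by gcongr
    _ = ‖L ∘L mulCLM c‖ := by field_simp

lemma HasDerivAt.hasFDerivAt_mulCLM {h : ℂ → ℂ} {c y : ℂ} (hh : HasDerivAt h c y) :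
    HasFDerivAt h (mulCLM c) y :=
  hh.hasFDerivAt.restrictScalars ℝ

lemma ae_deriv_ne_zero {h : ℂ → ℂ} (hhol : DifferentiableOn ℂ h (ball (0 : ℂ) 1))
    (hinj : Set.InjOn h (ball (0 : ℂ) 1)) :
    ∀ᵐ y ∂(volume.restrict (ball (0 : ℂ) 1)), deriv h y ≠ 0 := by
  have han : AnalyticOnNhd ℂ (deriv h) (ball (0 : ℂ) 1) :=
    (hhol.analyticOnNhd isOpen_ball).deriv
  rcases han.eqOn_zero_or_eventually_ne_zero_of_preconnected
    (convex_ball (0 : ℂ) 1).isPreconnected with h0 | h0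
  · -- If `h'` vanished identically, then `h 0 = h (1/2)`, contradicting injectivity.
    have m0 : (0 : ℂ) ∈ ball (0 : ℂ) 1 := by simp
    have m1 : (1 / 2 : ℂ) ∈ ball (0 : ℂ) 1 := by
      rw [mem_ball_zero_iff]
      norm_num
    have := isOpen_ball.is_const_of_deriv_eq_zero (convex_ball (0 : ℂ) 1).isPreconnected
      hhol h0 m0 m1
    have := hinj m0 m1 this
    norm_num at this
  · exact ae_restrict_le_codiscreteWithin measurableSet_ball h0

/-- The pointwise form of the invariance, at a noncritical point `y` of `h`. -/
lemma norm_fderiv_of_comp_eq {h : ℂ → ℂ} {u v : ℂ → ℝ} {y : ℂ} (hh : AnalyticAt ℂ h y)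
    (hne : deriv h y ≠ 0) (hv : DifferentiableAt ℝ v y) (hu : ∀ᶠ z in 𝓝 y, u (h z) = v z) :
    ‖fderiv ℝ v y‖ = ‖deriv h y‖ * ‖fderiv ℝ u (h y)‖ := by
  have hs := hh.hasStrictDerivAt.hasStrictFDerivAt_equiv hne
  have hdu : DifferentiableAt ℝ u (h y) := by
    have hg := hs.to_localInverse.hasFDerivAt.restrictScalars ℝ
    have hcont := hs.localInverse_continuousAt
    have happ := hs.localInverse_apply_image
    have hright := hs.eventually_right_inverse
    set g := hs.localInverse h _ y
    have hev : u =ᶠ[𝓝 (h y)] v ∘ g := by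
      have ht : Tendsto g (𝓝 (h y)) (𝓝 y) := by
        have := hcont.tendsto
        rwa [happ] at this
      filter_upwards [hright, ht.eventually hu] with x hx hx'
      rw [hx] at hx'
      exact hx'
    refine DifferentiableAt.congr_of_eventuallyEq ?_ hev
    exact DifferentiableAt.comp _ (by rwa [happ]) hg.differentiableAt
  have hchain := hdu.hasFDerivAt.comp y hh.differentiableAt.hasDerivAt.hasFDerivAt_mulCLM
  have hvd : HasFDerivAt v (fderiv ℝ u (h y) ∘L mulCLM (deriv h y)) y :=
    hchain.congr_of_eventuallyEq (hu.mono fun z hz => hz.symm)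
  rw [hvd.fderiv, norm_comp_mulCLM _ hne]

/-- Conformal invariance of the Dirichlet energy: if `h` maps the unit disc
conformally onto `Ω` with `h 0 = 0`, `v` is a `C¹` function with compact support
in the disc, and `u = v ∘ h⁻¹` on `Ω`, then `∫_Ω ‖∇u‖² = ∫_{B₁} ‖∇v‖²`. -/
theorem dirichlet_energy_conformal_invariance
    (Ω : Set ℂ) (hΩopen : IsOpen Ω) (hΩbdd : Bornology.IsBounded Ω)
    (hΩsc : SimplyConnectedSpace Ω) (h0Ω : (0 : ℂ) ∈ Ω)
    (h : ℂ → ℂ)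
    (hhol : DifferentiableOn ℂ h (ball (0 : ℂ) 1))
    (hinj : Set.InjOn h (ball (0 : ℂ) 1))
    (himage : h '' ball (0 : ℂ) 1 = Ω)
    (h0 : h 0 = 0)
    (v : ℂ → ℝ) (hv : ContDiff ℝ 1 v) (hvcpt : HasCompactSupport v)
    (hvsupp : tsupport v ⊆ ball (0 : ℂ) 1)
    (u : ℂ → ℝ) (hu : ∀ y ∈ ball (0 : ℂ) 1, u (h y) = v y) :
    ∫ x in Ω, ‖fderiv ℝ u x‖ ^ 2 = ∫ y in ball (0 : ℂ) 1, ‖fderiv ℝ v y‖ ^ 2 := by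
  have hderiv : ∀ y ∈ ball (0 : ℂ) 1,
      HasFDerivWithinAt h (mulCLM (deriv h y)) (ball (0 : ℂ) 1) y := fun y hy =>
    (hhol.differentiableAt (isOpen_ball.mem_nhds hy)).hasDerivAt.hasFDerivAt_mulCLM.hasFDerivWithinAt
  rw [← himage, integral_image_eq_integral_abs_det_fderiv_smul volume measurableSet_ball hderiv hinj]
  refine integral_congr_ae ?_
  filter_upwards [ae_deriv_ne_zero hhol hinj, ae_restrict_mem measurableSet_ball] with y hne hy
  have hnhds := isOpen_ball.mem_nhds hy
  have key := norm_fderiv_of_comp_eq (u := u) (v := v) (hhol.analyticAt hnhds) hne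
    ((hv.differentiable one_ne_zero) y) (eventually_of_mem hnhds hu)
  rw [key, det_mulCLM, abs_of_nonneg (by positivity), smul_eq_mul, mul_pow]
end

section
/- Let U ⊆ ℂ be a bounded open set and let {u_i} be a sequence of admissible test functions on U that concentrates at some point x ∈ closure(U). Then u_i → 0 in L²(U), i.e. lim_{i→∞} ∫_U u_i(y)² dy = 0. -/
/-!
The Gagliardo–Nirenberg–Sobolev inequality in dimension two bounds `∫ u²` by `C (∫ ‖∇u‖)²` for
every test function `u` (`exists_sobolev_const`), so it suffices that the `L¹` norms of the
gradients tend to `0`. Fix `ε > 0` and split `U` along `ball x ε`. By Cauchy–Schwarz, the small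
ball contributes at most a multiple of `ε`, its area being `π ε²` and the energy at most `1`; the
rest of `U` has finite area and carries an energy that tends to `0`. Cauchy–Schwarz is used in the
form `t ≤ c t² + c⁻¹` (`setIntegral_le_of_sq`), with `c = ε` on the ball and `c = ε⁻¹` off it.
-/

open Metric Complex MeasureTheory Filter

/-- A test function on `U`: `C¹` with compact support contained in `U`. -/
def IsTestFun (U : Set ℂ) (u : ℂ → ℝ) : Prop :=
  ContDiff ℝ 1 u ∧ HasCompactSupport u ∧ tsupport u ⊆ U

/-- The Dirichlet energy of `u` on `U`. -/
noncomputable def dirEnergy (U : Set ℂ) (u : ℂ → ℝ) : ℝ :=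
  ∫ x in U, ‖fderiv ℝ u x‖ ^ 2

/-- An admissible test function on `U`: a test function with Dirichlet energy at most 1. -/
def IsAdmissible (U : Set ℂ) (u : ℂ → ℝ) : Prop :=
  IsTestFun U u ∧ dirEnergy U u ≤ 1

/-- The sequence `u i` concentrates at `x ∈ closure U`. -/
def Concentrates (U : Set ℂ) (x : ℂ) (u : ℕ → ℂ → ℝ) : Prop :=
  Tendsto (fun i => dirEnergy U (u i)) atTop (nhds 1) ∧
  ∀ ε > (0 : ℝ), Tendsto (fun i => dirEnergy (U \ ball x ε) (u i)) atTop (nhds 0)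

/-- The weighted Cauchy–Schwarz bound on a set of finite measure. -/
lemma setIntegral_le_of_sq {f : ℂ → ℝ} (hf : Integrable f) (hf2 : Integrable (fun y => f y ^ 2))
    {S : Set ℂ} (hS : volume S ≠ ⊤) {c : ℝ} (hc : 0 < c) :
    ∫ y in S, f y ≤ c * (∫ y in S, f y ^ 2) + c⁻¹ * volume.real S := by
  have hconst : IntegrableOn (fun _ : ℂ => c⁻¹) S := integrableOn_const hS
  have hsq : IntegrableOn (fun y => c * f y ^ 2) S := (hf2.const_mul c).integrableOn
  calc ∫ y in S, f y ≤ ∫ y in S, (c * f y ^ 2 + c⁻¹) := by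
        refine setIntegral_mono hf.integrableOn (hsq.add hconst) fun y => ?_
        have h1 : c * f y ^ 2 + c⁻¹ - f y = c⁻¹ * ((c * f y - 1 / 2) ^ 2 + 3 / 4) := by
          field_simp
          ring
        have h2 : 0 ≤ c⁻¹ * ((c * f y - 1 / 2) ^ 2 + 3 / 4) := by positivity
        simp only
        linarith
    _ = c * (∫ y in S, f y ^ 2) + c⁻¹ * volume.real S := by
        rw [integral_add hsq hconst, integral_const_mul, setIntegral_const, smul_eq_mul, mul_comm c⁻¹]

lemma IsTestFun.fderiv_eq_zero {U : Set ℂ} {u : ℂ → ℝ} (hu : IsTestFun U u) {y : ℂ} (hy : y ∉ U) :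
    fderiv ℝ u y = 0 := by
  by_contra h
  exact hy (hu.2.2 (support_fderiv_subset ℝ h))

lemma IsTestFun.integrable_fderiv {U : Set ℂ} {u : ℂ → ℝ} (hu : IsTestFun U u) :
    Integrable (fderiv ℝ u) :=
  (hu.1.continuous_fderiv one_ne_zero).integrable_of_hasCompactSupport (hu.2.1.fderiv ℝ)

lemma IsTestFun.integrable_fderiv_sq {U : Set ℂ} {u : ℂ → ℝ} (hu : IsTestFun U u) :
    Integrable (fun y => ‖fderiv ℝ u y‖ ^ 2) := by
  refine ((hu.1.continuous_fderiv one_ne_zero).norm.pow 2).integrable_of_hasCompactSupport ?_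
  refine (hu.2.1.fderiv ℝ).mono fun y hy h => hy ?_
  simp [h]

/-- The Sobolev inequality `W^{1,1} ⊂ L²` in the plane, for real-valued integrals. -/
lemma exists_sobolev_const : ∃ C : ℝ, ∀ (U : Set ℂ) (u : ℂ → ℝ), IsTestFun U u →
    ∫ y in U, u y ^ 2 ≤ C * (∫ y in U, ‖fderiv ℝ u y‖) ^ 2 := by
  have hp : Real.HolderConjugate (Module.finrank ℝ ℂ) 2 := by
    rw [Complex.finrank_real_complex]
    exact_mod_cast Real.HolderConjugate.two_two
  obtain ⟨C, hC⟩ : ∃ C : NNReal, ∀ u : ℂ → ℝ, ContDiff ℝ 1 u → HasCompactSupport u →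
      ∫⁻ y, ‖u y‖ₑ ^ (2 : ℝ) ≤ C * (∫⁻ y, ‖fderiv ℝ u y‖ₑ) ^ (2 : ℝ) :=
    ⟨_, fun u h1 h2 => lintegral_pow_le_pow_lintegral_fderiv volume h1 h2 hp⟩
  refine ⟨C, fun U u hu => ?_⟩
  have key := hC u hu.1 hu.2.1
  have hgrad : ∫ y in U, ‖fderiv ℝ u y‖ = ∫ y, ‖fderiv ℝ u y‖ :=
    setIntegral_eq_integral_of_forall_compl_eq_zero fun y hy => by simp [hu.fderiv_eq_zero hy]
  have hint : Integrable (fun y => u y ^ 2) :=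
    (hu.1.continuous.pow 2).integrable_of_hasCompactSupport
      (hu.2.1.mono fun y hy h => hy (by simp [h]))
  refine (setIntegral_le_integral hint (ae_of_all _ fun y => sq_nonneg (u y))).trans ?_
  rw [hgrad, ← ENNReal.ofReal_le_ofReal_iff (by positivity),
    ofReal_integral_eq_lintegral_ofReal hint (ae_of_all _ fun y => sq_nonneg (u y)),
    ENNReal.ofReal_mul (NNReal.coe_nonneg _), ENNReal.ofReal_coe_nnreal,
    ENNReal.ofReal_pow (by positivity), ofReal_integral_norm_eq_lintegral_enorm hu.integrable_fderiv]
  simp only [ENNReal.rpow_ofNat] at key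
  refine le_of_eq_of_le (lintegral_congr fun y => ?_) key
  rw [← sq_abs, ENNReal.ofReal_pow (abs_nonneg _), ← Real.norm_eq_abs, ofReal_norm]

/-- The `L¹` norm of the gradient in terms of the energy outside a ball around `x`. -/
lemma integral_norm_fderiv_le {U : Set ℂ} (hUfin : volume U ≠ ⊤) (x : ℂ)
    {u : ℂ → ℝ} (hu : IsAdmissible U u) {ε : ℝ} (hε : 0 < ε) :
    ∫ y in U, ‖fderiv ℝ u y‖ ≤
      ε⁻¹ * dirEnergy (U \ ball x ε) u + ε * (1 + Real.pi + volume.real U) := by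
  have hf := hu.1.integrable_fderiv.norm
  have hf2 := hu.1.integrable_fderiv_sq
  rw [← integral_inter_add_sdiff (measurableSet_ball (x := x) (ε := ε)) hf.integrableOn]
  have hin := setIntegral_le_of_sq hf hf2 (S := U ∩ ball x ε)
    (measure_ne_top_of_subset Set.inter_subset_left hUfin) hε
  have hout := setIntegral_le_of_sq hf hf2 (S := U \ ball x ε)
    (measure_ne_top_of_subset Set.sdiff_subset hUfin) (inv_pos.2 hε)
  have henergy : ∫ y in U ∩ ball x ε, ‖fderiv ℝ u y‖ ^ 2 ≤ 1 :=
    (setIntegral_mono_set hf2.integrableOn (ae_of_all _ fun y => sq_nonneg _)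
      Set.inter_subset_left.eventuallyLE).trans hu.2
  have hball : volume.real (U ∩ ball x ε) ≤ Real.pi * ε ^ 2 := by
    refine (measureReal_mono Set.inter_subset_right measure_ball_lt_top.ne).trans_eq ?_
    rw [measureReal_def, Complex.volume_ball, ENNReal.toReal_mul, ENNReal.toReal_pow,
      ENNReal.toReal_ofReal hε.le, mul_comm]
    rfl
  have hdiff : volume.real (U \ ball x ε) ≤ volume.real U := measureReal_mono Set.sdiff_subset hUfin
  have h1 : ε * (∫ y in U ∩ ball x ε, ‖fderiv ℝ u y‖ ^ 2) ≤ ε * 1 := by gcongr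
  have h2 : ε⁻¹ * volume.real (U ∩ ball x ε) ≤ ε * Real.pi := by
    calc ε⁻¹ * volume.real (U ∩ ball x ε) ≤ ε⁻¹ * (Real.pi * ε ^ 2) := by gcongr
      _ = ε * Real.pi := by field_simp
  have h3 : ε * volume.real (U \ ball x ε) ≤ ε * volume.real U := by gcongr
  rw [inv_inv] at hout
  unfold dirEnergy
  linarith

/-- A concentrating sequence converges to `0` in `L²(U)`. -/
theorem concentrating_tendsto_zero_L2
    (U : Set ℂ) (hUopen : IsOpen U) (hUbdd : Bornology.IsBounded U)
    (x : ℂ) (hx : x ∈ closure U)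
    (u : ℕ → ℂ → ℝ)
    (hadm : ∀ i, IsAdmissible U (u i))
    (hconc : Concentrates U x u) :
    Tendsto (fun i => ∫ y in U, u i y ^ 2) atTop (nhds 0) := by
  have hUfin : volume U ≠ ⊤ := hUbdd.measure_lt_top.ne
  have hgrad : Tendsto (fun i => ∫ y in U, ‖fderiv ℝ (u i) y‖) atTop (nhds 0) := by
    rw [Metric.tendsto_nhds]
    intro δ hδ
    set K : ℝ := 1 + Real.pi + volume.real U with hK
    have hKpos : 0 < K := by positivity
    -- With this radius the part of the bound independent of `i` is `δ / 2`.
    set ε : ℝ := δ / (2 * K) with hε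
    have hεpos : 0 < ε := by positivity
    have hεK : ε * K = δ / 2 := by
      rw [hε]
      field_simp
    have hlim := (hconc.2 ε hεpos).const_mul ε⁻¹
    rw [mul_zero] at hlim
    filter_upwards [hlim.eventually_lt_const (half_pos hδ)] with i hi
    have hle := integral_norm_fderiv_le hUfin x (hadm i) hεpos
    rw [← hK, hεK] at hle
    rw [Real.dist_eq, sub_zero, abs_of_nonneg (integral_nonneg fun y => norm_nonneg _)]
    linarith
  obtain ⟨C, hC⟩ := exists_sobolev_const
  have hbound : Tendsto (fun i => C * (∫ y in U, ‖fderiv ℝ (u i) y‖) ^ 2) atTop (nhds 0) := by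
    simpa using (hgrad.pow 2).const_mul C
  exact squeeze_zero (fun i => integral_nonneg fun y => sq_nonneg _)
    (fun i => hC U (u i) (hadm i).1) hbound
end
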